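/- For a positive integer q and an integer n, define C̄_q(n) = (1/|SL₂(ℤ/qℤ)|) · Σ_{w ∈ SL₂(ℤ/qℤ)} c_q(d(w) − n), where d(w) is the bottom-right entry of w. Then C̄ is multiplicative in q: if q₁ and q₂ are coprime positive integers, then C̄_{q₁q₂}(n) = C̄_{q₁}(n) · C̄_{q₂}(n). -/

import Mathlib

/-- The Ramanujan sum `c_q(m) = Σ_{a ∈ (ℤ/qℤ)ˣ} e^{2πi a m / q}`. -/
noncomputable def ramanujanSum (q : ℕ) [NeZero q] (m : ℤ) : ℂ :=
  ∑ a : (ZMod q)ˣ,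
    Complex.exp (2 * Real.pi * Complex.I * (((a : ZMod q).val : ℂ) * (m : ℂ)) / (q : ℂ))

/-- The bottom-right entry of `w ∈ SL₂(ℤ/qℤ)`, lifted to `ℤ`. -/
def dEntry {q : ℕ} (w : Matrix.SpecialLinearGroup (Fin 2) (ZMod q)) : ℤ :=
  ((w : Matrix (Fin 2) (Fin 2) (ZMod q)) 1 1).val

/-- `C̄_q(n) = (1/|SL₂(ℤ/qℤ)|) · Σ_{w ∈ SL₂(ℤ/qℤ)} c_q(d(w) − n)`. -/
noncomputable def Cbar (q : ℕ) [NeZero q] (n : ℤ) : ℂ :=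
  (1 / (Fintype.card (Matrix.SpecialLinearGroup (Fin 2) (ZMod q)) : ℂ)) *
    ∑ w : Matrix.SpecialLinearGroup (Fin 2) (ZMod q), ramanujanSum q (dEntry w - n)

/-!
Under the Chinese remainder isomorphism `ZMod (q₁ * q₂) ≃ ZMod q₁ × ZMod q₂` the group `SL₂` splits
as a product, so it is enough to split the summand `c_q`. A Bézout relation `u q₂ + v q₁ = 1` gives
`1 / (q₁ q₂) = u / q₁ + v / q₂`: the standard character modulo `q₁ q₂` is the product of the
standard characters modulo `q₁` and `q₂`, precomposed with multiplication by the units `u` and `v`.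
These units are absorbed by the sum over `(ZMod qᵢ)ˣ`.
-/

open ZMod
open scoped BigOperators

section SpecialLinearGroup

variable {ι R S T : Type*} [Fintype ι] [DecidableEq ι] [CommRing R] [CommRing S] [CommRing T]

lemma det_of_prodMk (A : Matrix ι ι S) (B : Matrix ι ι T) :
    (Matrix.of fun i j => (A i j, B i j)).det = (A.det, B.det) :=
  Prod.ext ((RingHom.fst S T).map_det _) ((RingHom.snd S T).map_det _)

/-- The isomorphism `SL(ι, R) ≃ SL(ι, S) × SL(ι, T)` coming from a product decomposition of the
ring `R`, used with the Chinese remainder theorem. The decomposition is an arbitrary isomorphism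
`R ≃+* S × T`, since `ZMod (m * n)` is not literally a product. -/
def specialLinearGroupEquivProd (e : R ≃+* S × T) :
    Matrix.SpecialLinearGroup ι R ≃*
      Matrix.SpecialLinearGroup ι S × Matrix.SpecialLinearGroup ι T where
  toFun w := (w.map ((RingHom.fst S T).comp e), w.map ((RingHom.snd S T).comp e))
  invFun p := Matrix.SpecialLinearGroup.map (e.symm : S × T →+* R)
    ⟨Matrix.of fun i j => (p.1 i j, p.2 i j), by
      rw [det_of_prodMk, p.1.det_coe, p.2.det_coe, Prod.mk_one_one]⟩
  left_inv w := by
    ext i j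
    exact e.symm_apply_apply (w i j)
  right_inv p := by
    ext i j
    · exact congrArg Prod.fst (e.apply_symm_apply (p.1 i j, p.2 i j))
    · exact congrArg Prod.snd (e.apply_symm_apply (p.1 i j, p.2 i j))
  map_mul' w w' := by simp only [map_mul, Prod.mk_mul_mk]

lemma specialLinearGroupEquivProd_fst_apply (e : R ≃+* S × T)
    (w : Matrix.SpecialLinearGroup ι R) (i j : ι) :
    (specialLinearGroupEquivProd e w).1 i j = (e (w i j)).1 :=
  rfl

lemma specialLinearGroupEquivProd_snd_apply (e : R ≃+* S × T)
    (w : Matrix.SpecialLinearGroup ι R) (i j : ι) :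
    (specialLinearGroupEquivProd e w).2 i j = (e (w i j)).2 :=
  rfl

end SpecialLinearGroup

section UnitCharSum

variable {R S T K : Type*} [Ring R] [Ring S] [Ring T] [CommSemiring K]
  [Fintype Rˣ] [Fintype Sˣ] [Fintype Tˣ]

/-- The Ramanujan sum `∑ a ∈ Rˣ, ψ (a x)` of an additive character `ψ` of a ring `R`. The classical
`c_q` is the case of the standard character of `ZMod q`. -/
def unitCharSum (ψ : AddChar R K) (x : R) : K :=
  ∑ a : Rˣ, ψ (a * x)

lemma unitCharSum_mulShift (ψ : AddChar R K) (u : Rˣ) (x : R) :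
    unitCharSum (ψ.mulShift u) x = unitCharSum ψ x :=
  Fintype.sum_equiv (Equiv.mulLeft u) _ _ fun a => by
    simp [AddChar.mulShift_apply, mul_assoc]

lemma unitCharSum_eq_mul_of_ringEquiv (e : R ≃+* S × T) {ψ : AddChar R K} {χ : AddChar S K}
    {η : AddChar T K} (h : ∀ x, ψ x = χ (e x).1 * η (e x).2) (x : R) :
    unitCharSum ψ x = unitCharSum χ (e x).1 * unitCharSum η (e x).2 := by
  unfold unitCharSum
  rw [Fintype.sum_mul_sum, ← Fintype.sum_prod_type']
  refine Fintype.sum_equiv ((Units.mapEquiv e.toMulEquiv).trans .prodUnits).toEquiv _ _ fun a => ?_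
  rw [h, map_mul]
  rfl

end UnitCharSum

lemma expect_eq_mul_of_equiv_prod {α β γ K : Type*} [Fintype α] [Fintype β] [Fintype γ]
    [CommSemiring K] [Algebra ℚ≥0 K] (e : α ≃ β × γ) {F : α → K} {f : β → K} {g : γ → K}
    (h : ∀ a, F a = f (e a).1 * g (e a).2) :
    𝔼 a, F a = (𝔼 b, f b) * 𝔼 c, g c := by
  rw [Fintype.expect_mul_expect, ← Finset.expect_product', Finset.univ_product_univ]
  exact Fintype.expect_equiv e _ _ h

section StdAddChar

variable {q₁ q₂ : ℕ} [NeZero q₁] [NeZero q₂]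

lemma stdAddChar_intCast_eq_mul_of_bezout {u v : ℤ} (h : u * q₂ + v * q₁ = 1) (x : ℤ) :
    stdAddChar (x : ZMod (q₁ * q₂)) =
      stdAddChar ((u * x : ℤ) : ZMod q₁) * stdAddChar ((v * x : ℤ) : ZMod q₂) := by
  have h₁ : (q₁ : ℂ) ≠ 0 := NeZero.ne _
  have h₂ : (q₂ : ℂ) ≠ 0 := NeZero.ne _
  have hℂ : (u : ℂ) * q₂ + v * q₁ = 1 := by exact_mod_cast h
  simp only [stdAddChar_coe, ← Complex.exp_add]
  congr 1
  push_cast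
  field_simp
  linear_combination (-(x : ℂ)) * hℂ

lemma exists_units_stdAddChar_eq_mul_mulShift (hq : q₁.Coprime q₂) :
    ∃ (u : (ZMod q₁)ˣ) (v : (ZMod q₂)ˣ), ∀ x : ZMod (q₁ * q₂),
      stdAddChar x = stdAddChar.mulShift u (chineseRemainder hq x).1 *
        stdAddChar.mulShift v (chineseRemainder hq x).2 := by
  obtain ⟨v, u, h⟩ := Nat.isCoprime_iff_coprime.mpr hq
  have bezout : u * q₂ + v * q₁ = 1 := by rw [add_comm, h]
  have hu : (u : ZMod q₁) * q₂ = 1 := by simpa using congrArg (Int.cast : ℤ → ZMod q₁) bezout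
  have hv : (v : ZMod q₂) * q₁ = 1 := by simpa using congrArg (Int.cast : ℤ → ZMod q₂) bezout
  refine ⟨.mkOfMulEqOne _ _ hu, .mkOfMulEqOne _ _ hv, fun x => ?_⟩
  obtain ⟨x, rfl⟩ := intCast_surjective x
  simp [stdAddChar_intCast_eq_mul_of_bezout bezout, AddChar.mulShift_apply]

lemma unitCharSum_stdAddChar_mul (hq : q₁.Coprime q₂) (x : ZMod (q₁ * q₂)) :
    unitCharSum stdAddChar x = unitCharSum stdAddChar (chineseRemainder hq x).1 *
      unitCharSum stdAddChar (chineseRemainder hq x).2 := by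
  obtain ⟨u, v, h⟩ := exists_units_stdAddChar_eq_mul_mulShift hq
  rw [unitCharSum_eq_mul_of_ringEquiv _ h, unitCharSum_mulShift, unitCharSum_mulShift]

end StdAddChar

lemma ramanujanSum_eq_unitCharSum (q : ℕ) [NeZero q] (m : ℤ) :
    ramanujanSum q m = unitCharSum stdAddChar (m : ZMod q) := by
  refine Fintype.sum_congr _ _ fun a => ?_
  simpa using (stdAddChar_coe (N := q) ((a : ZMod q).val * m)).symm

lemma Cbar_eq_expect (q : ℕ) [NeZero q] (n : ℤ) :
    Cbar q n = 𝔼 w : Matrix.SpecialLinearGroup (Fin 2) (ZMod q),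
      unitCharSum stdAddChar (w 1 1 - n : ZMod q) := by
  rw [Fintype.expect_eq_sum_div_card, Cbar, one_div_mul_eq_div]
  simp [ramanujanSum_eq_unitCharSum, dEntry]

theorem stmt7 (q₁ q₂ : ℕ) [NeZero q₁] [NeZero q₂] (hq : Nat.Coprime q₁ q₂) (n : ℤ) :
    Cbar (q₁ * q₂) n = Cbar q₁ n * Cbar q₂ n := by
  simp only [Cbar_eq_expect]
  refine expect_eq_mul_of_equiv_prod (specialLinearGroupEquivProd (chineseRemainder hq)).toEquiv
    fun w => ?_
  simp [unitCharSum_stdAddChar_mul hq, specialLinearGroupEquivProd_fst_apply,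
    specialLinearGroupEquivProd_snd_apply]
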